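/- arXiv:1608.06730 — 3 statements merged into one kernel-verified Lean document; each statement's English description precedes it below -/
import Mathlib

section
/- Let 1 ≤ q ≤ ∞ and 4/3 < p < ∞. Then every Schwartz function φ on ℝ³ satisfies ‖φ‖_{l^q l^p L²} < ∞; that is, the Schwartz functions are contained in l^q l^p L². -/
noncomputable section

open MeasureTheory
open scoped ENNReal

abbrev R3 := ℝ × ℝ × ℝ

/-- (Nonunitary) Fourier transform on ℝ³ = ℝ_x × ℝ²_y. -/
def ft3 (f : R3 → ℂ) (ζ : R3) : ℂ :=
  ∫ z : R3, Complex.exp (-Complex.I *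
    ((z.1 * ζ.1 + z.2.1 * ζ.2.1 + z.2.2 * ζ.2.2 : ℝ) : ℂ)) * f z

/-- The region Γ_{λ,k} = {(ξ,η) : λ ≤ |ξ| < 2λ, |η/ξ − k|_∞ ≤ λ/2}. -/
def Gam (l : ℝ) (k : ℝ × ℝ) : Set R3 :=
  {ζ : R3 | l ≤ |ζ.1| ∧ |ζ.1| < 2 * l ∧
    max |ζ.2.1 / ζ.1 - k.1| |ζ.2.2 / ζ.1 - k.2| ≤ l / 2}

/-- Fourier projection f_{Γ_{λ,k}}: inverse Fourier transform of the
characteristic function of Γ_{λ,k} times f̂. -/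
def projG (l : ℝ) (k : ℝ × ℝ) (φ : SchwartzMap R3 ℂ) (z : R3) : ℂ :=
  ∫ ζ in Gam l k, Complex.exp (Complex.I *
    ((z.1 * ζ.1 + z.2.1 * ζ.2.1 + z.2.2 * ζ.2.2 : ℝ) : ℂ)) * ft3 (fun w => φ w) ζ

/-- ℓ^p sum in ℝ≥0∞, with the usual modification for p = ∞. -/
def lpS (p : ℝ≥0∞) {ι : Type*} (f : ι → ℝ≥0∞) : ℝ≥0∞ :=
  if p = ∞ then ⨆ i, f i else (∑' i, f i ^ p.toReal) ^ (1 / p.toReal)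

/-- The norm ‖φ‖_{l^q l^p L²} = (∑_{λ∈2^ℤ} λ^{q/2} (∑_{k∈λℤ²} ‖φ_{Γ_{λ,k}}‖_{L²}^p)^{q/p})^{1/q}. -/
def lqlpNorm (q p : ℝ≥0∞) (φ : SchwartzMap R3 ℂ) : ℝ≥0∞ :=
  lpS q fun n : ℤ => ((2 : ℝ≥0∞) ^ n) ^ ((1 : ℝ) / 2) *
    lpS p fun m : ℤ × ℤ =>
      eLpNorm (projG ((2 : ℝ) ^ n) ((2 : ℝ) ^ n * (m.1 : ℝ), (2 : ℝ) ^ n * (m.2 : ℝ)) φ) 2 volume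

/-!
The region `Γ_{λ,k}` has volume `O(λ⁵)`, and at `k = λ m` with `m ∈ ℤ²` each of its points has
`|ξ| ≥ λ` and `|η_i| ≥ λ² |m_i| / 2`. Since `φ̂` is again a Schwartz function, Plancherel bounds the
`L²` norm of the piece by `λ^{5/2} (1 + λ)^{-6} ∏_i (1 + λ² |m_i| / 2)^{-2}`. The `ℓ^p` sum over `m`
costs a factor `(1 + 4 / λ²)^{2/p}`, so with the weight `λ^{1/2}` the shell at scale `λ` contributes
at most a multiple of `(λ / (1 + λ)²)^{3 - 4/p}`. For `p > 4/3` the exponent is positive and this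
decays geometrically as `λ → 0` and as `λ → ∞`, hence is summable to every power `q`.
-/

section Plancherel

open FourierTransform
open scoped SchwartzMap ContDiff

variable {E F : Type*} [NormedAddCommGroup E] [InnerProductSpace ℝ E] [FiniteDimensional ℝ E]
  [MeasurableSpace E] [BorelSpace E] [NormedAddCommGroup F] [InnerProductSpace ℂ F]
  [CompleteSpace F] {f : E → F}

lemma integral_schwartz_smul_fourier_toLp (hf : Integrable f) (hf2 : MemLp f 2 volume)
    (ψ : 𝓢(E, ℂ)) :
    ∫ x, ψ x • (𝓕 (hf2.toLp f) : Lp (α := E) F 2 volume) x = ∫ x, ψ x • 𝓕 f x := by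
  have distributional : ∫ x, (𝓕 ψ) x • hf2.toLp f x
      = ∫ x, ψ x • (𝓕 (hf2.toLp f) : Lp (α := E) F 2 volume) x := by
    simpa only [TemperedDistribution.fourier_apply, Lp.toTemperedDistribution_apply] using
      congrArg (fun T ↦ T ψ) (Lp.fourier_toTemperedDistribution_eq (hf2.toLp f))
  have representative : ∫ x, (𝓕 ψ) x • hf2.toLp f x = ∫ x, (𝓕 ψ) x • f x := by
    apply integral_congr_ae
    filter_upwards [hf2.coeFn_toLp] with x hx
    rw [hx]
  have duality : ∫ x, (𝓕 ψ) x • f x = ∫ x, ψ x • 𝓕 f x := by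
    simpa using! VectorFourier.integral_fourierIntegral_smul_eq_flip (L := innerₗ E)
      Real.continuous_fourierChar continuous_inner ψ.integrable hf
  rw [← distributional, representative, duality]

lemma fourier_toLp_ae_eq (hf : Integrable f) (hf2 : MemLp f 2 volume) :
    (𝓕 (hf2.toLp f) : Lp (α := E) F 2 volume) =ᵐ[volume] 𝓕 f := by
  have continuous_fourier : Continuous (𝓕 f) :=
    VectorFourier.fourierIntegral_continuous Real.continuous_fourierChar continuous_inner hf
  refine ae_eq_of_integral_contDiff_smul_eq
    ((Lp.memLp (𝓕 (hf2.toLp f) : Lp (α := E) F 2 volume)).locallyIntegrable one_le_two)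
    continuous_fourier.locallyIntegrable fun g g_smooth g_supp ↦ ?_
  have ofReal_g_supp : HasCompactSupport fun x ↦ (g x : ℂ) :=
    g_supp.comp_left (g := Complex.ofReal) Complex.ofReal_zero
  have ofReal_g_smooth : ContDiff ℝ ∞ fun x ↦ (g x : ℂ) :=
    Complex.ofRealCLM.contDiff.comp g_smooth
  simpa using
    integral_schwartz_smul_fourier_toLp hf hf2 (ofReal_g_supp.toSchwartzMap ofReal_g_smooth)

theorem eLpNorm_two_fourier (hf : Integrable f) (hf2 : MemLp f 2 volume) :
    eLpNorm (𝓕 f) 2 volume = eLpNorm f 2 volume := by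
  rw [← eLpNorm_congr_ae (fourier_toLp_ae_eq hf hf2), ← eLpNorm_congr_ae hf2.coeFn_toLp,
    ← ENNReal.toReal_eq_toReal_iff' (Lp.eLpNorm_ne_top _) (Lp.eLpNorm_ne_top _)]
  exact Lp.norm_fourier_eq (hf2.toLp f)

end Plancherel

lemma eLpNorm_comp_const_smul {E F : Type*} [NormedAddCommGroup E] [NormedSpace ℝ E]
    [FiniteDimensional ℝ E] [MeasurableSpace E] [BorelSpace E] [NormedAddCommGroup F]
    (μ : Measure E) [μ.IsAddHaarMeasure] {p : ℝ≥0∞} (hp : p ≠ ∞) {c : ℝ} (hc : c ≠ 0)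
    (f : E → F) :
    eLpNorm (fun x ↦ f (c • x)) p μ =
      ENNReal.ofReal |(c ^ Module.finrank ℝ E)⁻¹| ^ (1 / p).toReal * eLpNorm f p μ := by
  have map_eq := (measurableEmbedding_const_smul₀ hc).eLpNorm_map_measure (μ := μ) (g := f) (p := p)
  rw [Function.comp_def, Measure.map_addHaar_smul _ hc,
    eLpNorm_smul_measure_of_ne_top hp, smul_eq_mul] at map_eq
  exact map_eq.symm

/-- `ℝ × ℝ × ℝ` with its Euclidean norm, so that Mathlib's Fourier transform on inner product
spaces applies. -/
abbrev EuclideanR3 := WithLp 2 (ℝ × WithLp 2 (ℝ × ℝ))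

/-- The identity from `ℝ × ℝ × ℝ` with the sup norm to the same space with the Euclidean norm. -/
def euclideanEquiv : R3 ≃L[ℝ] EuclideanR3 :=
  ((ContinuousLinearEquiv.refl ℝ ℝ).prodCongr (WithLp.prodContinuousLinearEquiv 2 ℝ ℝ ℝ).symm).trans
    (WithLp.prodContinuousLinearEquiv 2 ℝ ℝ (WithLp 2 (ℝ × ℝ))).symm

lemma inner_euclideanEquiv (z ζ : R3) :
    inner ℝ (euclideanEquiv z) (euclideanEquiv ζ) = z.1 * ζ.1 + z.2.1 * ζ.2.1 + z.2.2 * ζ.2.2 := by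
  simp only [euclideanEquiv, ContinuousLinearEquiv.trans_apply,
    ContinuousLinearEquiv.prodCongr_apply, ContinuousLinearEquiv.refl_apply,
    WithLp.prodContinuousLinearEquiv_symm_apply, WithLp.prod_inner_apply, RCLike.inner_apply,
    conj_trivial]
  ring

lemma finrank_euclideanR3 : Module.finrank ℝ EuclideanR3 = 3 := by
  rw [← euclideanEquiv.toLinearEquiv.finrank_eq]
  simp

lemma measurableEmbedding_euclideanEquiv : MeasurableEmbedding euclideanEquiv :=
  euclideanEquiv.toHomeomorph.measurableEmbedding

lemma measurePreserving_euclideanEquiv : MeasurePreserving euclideanEquiv :=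
  (WithLp.volume_preserving_toLp ℝ (WithLp 2 (ℝ × ℝ))).comp
    ((MeasurePreserving.id volume).prod (WithLp.volume_preserving_toLp ℝ ℝ))

lemma measurePreserving_euclideanEquiv_symm : MeasurePreserving euclideanEquiv.symm :=
  MeasurePreserving.symm euclideanEquiv.toHomeomorph.toMeasurableEquiv
    measurePreserving_euclideanEquiv

section FourierR3

open FourierTransform
open scoped SchwartzMap

lemma ft3_eq_fourier (f : R3 → ℂ) (ζ : R3) :
    ft3 f ζ = 𝓕 (f ∘ euclideanEquiv.symm) ((2 * Real.pi)⁻¹ • euclideanEquiv ζ) := by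
  rw [Real.fourier_eq', ← measurePreserving_euclideanEquiv.integral_comp
    measurableEmbedding_euclideanEquiv, ft3]
  congr! 2 with _
  rw [inner_smul_right, inner_euclideanEquiv, smul_eq_mul, Function.comp_apply,
    ContinuousLinearEquiv.symm_apply_apply]
  congr 2
  have : (Real.pi : ℂ) ≠ 0 := Complex.ofReal_ne_zero.2 Real.pi_ne_zero
  push_cast
  field_simp

theorem exists_schwartzMap_eq_ft3 (φ : 𝓢(R3, ℂ)) : ∃ ψ : 𝓢(R3, ℂ), ⇑ψ = ft3 φ := by
  let scaling : EuclideanR3 ≃L[ℝ] EuclideanR3 :=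
    .smulLeft (Units.mk0 (2 * Real.pi)⁻¹ (inv_ne_zero Real.two_pi_pos.ne'))
  let φE : 𝓢(EuclideanR3, ℂ) :=
    SchwartzMap.compCLMOfContinuousLinearEquiv ℂ euclideanEquiv.symm φ
  refine ⟨SchwartzMap.compCLMOfContinuousLinearEquiv ℂ (euclideanEquiv.trans scaling) (𝓕 φE), ?_⟩
  ext ζ
  rw [ft3_eq_fourier]
  rfl

theorem eLpNorm_two_ft3 {h : R3 → ℂ} (hh : Integrable h) (hh2 : MemLp h 2) :
    eLpNorm (ft3 h) 2 volume = ENNReal.ofReal √((2 * Real.pi) ^ 3) *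
      eLpNorm h 2 volume := by
  set H : EuclideanR3 → ℂ := h ∘ euclideanEquiv.symm with hH
  have H_integrable : Integrable H :=
    measurePreserving_euclideanEquiv_symm.integrable_comp_of_integrable hh
  have H_memLp : MemLp H 2 := hh2.comp_measurePreserving measurePreserving_euclideanEquiv_symm
  have dilation_pos : (0 : ℝ) < 2 * Real.pi := Real.two_pi_pos
  have ft3_eq : ft3 h = (fun x ↦ 𝓕 H ((2 * Real.pi)⁻¹ • x)) ∘ euclideanEquiv :=
    funext (ft3_eq_fourier h)
  rw [ft3_eq, ← measurableEmbedding_euclideanEquiv.eLpNorm_map_measure,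
    measurePreserving_euclideanEquiv.map_eq,
    eLpNorm_comp_const_smul volume ENNReal.ofNat_ne_top (inv_ne_zero dilation_pos.ne'),
    eLpNorm_two_fourier H_integrable H_memLp, hH,
    eLpNorm_comp_measurePreserving hh2.1 measurePreserving_euclideanEquiv_symm, finrank_euclideanR3,
    inv_pow, inv_inv, abs_of_pos (pow_pos dilation_pos 3), Real.sqrt_eq_rpow,
    ← ENNReal.ofReal_rpow_of_pos (pow_pos dilation_pos 3)]
  simp

end FourierR3

lemma measurePreserving_neg_R3 : MeasurePreserving (Neg.neg : R3 → R3) :=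
  (Measure.measurePreserving_neg volume).prod
    ((Measure.measurePreserving_neg volume).prod (Measure.measurePreserving_neg volume))

section LpSum

variable {ι κ : Type*} {p : ℝ≥0∞}

lemma lpS_top (f : ι → ℝ≥0∞) : lpS ∞ f = ⨆ i, f i := if_pos rfl

lemma lpS_of_ne_top (hp : p ≠ ∞) (f : ι → ℝ≥0∞) :
    lpS p f = (∑' i, f i ^ p.toReal) ^ (1 / p.toReal) := if_neg hp

lemma lpS_mono {f g : ι → ℝ≥0∞} (h : ∀ i, f i ≤ g i) : lpS p f ≤ lpS p g := by
  rcases eq_or_ne p ∞ with rfl | hp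
  · simpa only [lpS_top] using iSup_mono h
  · simp only [lpS_of_ne_top hp]
    gcongr
    exact h _

lemma lpS_const_mul (hp : p ≠ 0) (c : ℝ≥0∞) (f : ι → ℝ≥0∞) :
    lpS p (fun i ↦ c * f i) = c * lpS p f := by
  rcases eq_or_ne p ∞ with rfl | hp'
  · simp only [lpS_top, ENNReal.mul_iSup]
  · have hP : 0 < p.toReal := ENNReal.toReal_pos hp hp'
    simp only [lpS_of_ne_top hp', ENNReal.mul_rpow_of_nonneg _ _ hP.le, ENNReal.tsum_mul_left]
    rw [ENNReal.mul_rpow_of_nonneg _ _ (by positivity), ← ENNReal.rpow_mul,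
      mul_one_div_cancel hP.ne', ENNReal.rpow_one]

lemma lpS_prod_mul (f : ι → ℝ≥0∞) (g : κ → ℝ≥0∞) :
    lpS p (fun m : ι × κ ↦ f m.1 * g m.2) = lpS p f * lpS p g := by
  rcases eq_or_ne p ∞ with rfl | hp
  · simp only [lpS_top, iSup_prod, ENNReal.iSup_mul, ENNReal.mul_iSup]
    exact iSup_comm
  · simp only [lpS_of_ne_top hp, ENNReal.mul_rpow_of_nonneg _ _ ENNReal.toReal_nonneg]
    rw [ENNReal.tsum_prod (f := fun i j ↦ f i ^ p.toReal * g j ^ p.toReal),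
      ← ENNReal.mul_rpow_of_nonneg _ _ (by positivity)]
    simp only [ENNReal.tsum_mul_left, ENNReal.tsum_mul_right]

lemma lpS_le_tsum_rpow_inv (hp : 1 ≤ p) {f : ι → ℝ≥0∞} (hf : ∀ i, f i ≤ 1) :
    lpS p f ≤ (∑' i, f i) ^ p⁻¹.toReal := by
  rcases eq_or_ne p ∞ with rfl | hp'
  · simpa [lpS_top] using hf
  · have hP : 1 ≤ p.toReal := by simpa using ENNReal.toReal_mono hp' hp
    rw [lpS_of_ne_top hp', one_div, ENNReal.toReal_inv]
    gcongr with i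
    exact ENNReal.rpow_le_self_of_le_one (hf i) hP

lemma tsum_int_pow_natAbs_ne_top {r : ℝ≥0∞} (hr : r < 1) : ∑' n : ℤ, r ^ n.natAbs ≠ ∞ := by
  have geometric : ∑' n : ℕ, r ^ n ≠ ∞ := by
    simpa [ENNReal.tsum_geometric, tsub_eq_zero_iff_le] using hr
  rw [tsum_of_nat_of_neg_add_one ENNReal.summable ENNReal.summable]
  refine ENNReal.add_ne_top.2 ⟨by simpa using geometric, ?_⟩
  refine ne_top_of_le_ne_top geometric (ENNReal.tsum_le_tsum fun n ↦ ?_)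
  exact pow_le_pow_right_of_le_one' hr.le (by omega)

lemma lpS_ne_top_of_le_geometric (hp : p ≠ 0) {c r : ℝ≥0∞} (hc : c ≠ ∞) (hr : r < 1)
    {f : ℤ → ℝ≥0∞} (hf : ∀ n, f n ≤ c * r ^ n.natAbs) : lpS p f ≠ ∞ := by
  suffices lpS p (fun n : ℤ ↦ r ^ n.natAbs) ≠ ∞ from
    ne_top_of_le_ne_top (ENNReal.mul_ne_top hc this) ((lpS_mono hf).trans_eq (lpS_const_mul hp c _))
  rcases eq_or_ne p ∞ with rfl | hp'
  · rw [lpS_top]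
    exact ne_top_of_le_ne_top ENNReal.one_ne_top (iSup_le fun n ↦ pow_le_one' hr.le _)
  · have hP : 0 < p.toReal := ENNReal.toReal_pos hp hp'
    have pow_rpow_comm (n : ℤ) : (r ^ n.natAbs) ^ p.toReal = (r ^ p.toReal) ^ n.natAbs := by
      simp only [← ENNReal.rpow_natCast, ← ENNReal.rpow_mul, mul_comm]
    simp only [lpS_of_ne_top hp', pow_rpow_comm]
    exact ENNReal.rpow_ne_top_of_nonneg (by positivity)
      (tsum_int_pow_natAbs_ne_top (ENNReal.rpow_lt_one hr hP))

end LpSum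

/-- The decay in one lattice direction of a Schwartz function sampled at spacing `s`. -/
def latticeWeight (s : ℝ) (j : ℤ) : ℝ≥0∞ := ENNReal.ofReal ((1 + s * |(j : ℝ)|) ^ 2)⁻¹

lemma latticeWeight_le_one {s : ℝ} (hs : 0 ≤ s) (j : ℤ) : latticeWeight s j ≤ 1 :=
  ENNReal.ofReal_le_one.2 <| inv_le_one_of_one_le₀ <| one_le_pow₀ <|
    le_add_of_nonneg_right (by positivity)

lemma sum_range_inv_one_add_mul_sq_le {s : ℝ} (hs : 0 < s) (n : ℕ) :
    ∑ j ∈ Finset.range n, ((1 + s * ((j : ℝ) + 1)) ^ 2)⁻¹ ≤ s⁻¹ * (1 - (1 + s * n)⁻¹) := by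
  induction n with
  | zero => simp
  | succ n ih =>
    have step : ((1 + s * ((n : ℝ) + 1)) ^ 2)⁻¹ ≤
        s⁻¹ * ((1 + s * (n : ℝ))⁻¹ - (1 + s * ((n : ℝ) + 1))⁻¹) := calc
      _ ≤ ((1 + s * (n : ℝ)) * (1 + s * ((n : ℝ) + 1)))⁻¹ := by
        rw [sq]
        gcongr
        linarith
      _ = _ := by field_simp; ring
    rw [Finset.sum_range_succ]
    push_cast
    linarith

lemma tsum_latticeWeight_succ_le {s : ℝ} (hs : 0 < s) :
    ∑' j : ℕ, latticeWeight s (j + 1) ≤ ENNReal.ofReal s⁻¹ := by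
  refine ENNReal.tsum_le_of_sum_range_le fun n ↦ ?_
  have abs_succ (j : ℕ) : |(((j : ℤ) + 1 : ℤ) : ℝ)| = j + 1 := by
    push_cast
    exact abs_of_nonneg (by positivity)
  simp only [latticeWeight, abs_succ]
  rw [← ENNReal.ofReal_sum_of_nonneg fun _ _ ↦ by positivity]
  refine ENNReal.ofReal_le_ofReal ((sum_range_inv_one_add_mul_sq_le hs n).trans ?_)
  exact mul_le_of_le_one_right (by positivity) (sub_le_self _ (by positivity))

lemma tsum_latticeWeight_le {s : ℝ} (hs : 0 < s) :
    ∑' j : ℤ, latticeWeight s j ≤ ENNReal.ofReal (1 + 2 / s) := by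
  have weight_neg (j : ℤ) : latticeWeight s (-j) = latticeWeight s j := by
    simp [latticeWeight]
  have tail := tsum_latticeWeight_succ_le hs
  rw [tsum_of_nat_of_neg_add_one ENNReal.summable ENNReal.summable,
    tsum_eq_zero_add' ENNReal.summable]
  simp only [weight_neg]
  push_cast
  calc _ ≤ ENNReal.ofReal 1 + ENNReal.ofReal s⁻¹ + ENNReal.ofReal s⁻¹ := by
        gcongr
        simp [latticeWeight]
    _ = ENNReal.ofReal (1 + 2 / s) := by
        rw [← ENNReal.ofReal_add (by positivity) (by positivity),
          ← ENNReal.ofReal_add (by positivity) (by positivity)]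
        congr 1
        ring

lemma lpS_latticeWeight_prod_le {p : ℝ≥0∞} (hp : 1 ≤ p) {s : ℝ} (hs : 0 < s) :
    lpS p (fun m : ℤ × ℤ ↦ latticeWeight s m.1 * latticeWeight s m.2) ≤
      ENNReal.ofReal ((1 + 2 / s) ^ (2 * p⁻¹.toReal)) := by
  have line : lpS p (latticeWeight s) ≤ ENNReal.ofReal (1 + 2 / s) ^ p⁻¹.toReal :=
    (lpS_le_tsum_rpow_inv hp (latticeWeight_le_one hs.le)).trans <| by
      gcongr
      exact tsum_latticeWeight_le hs
  rw [lpS_prod_mul]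
  calc _ ≤ ENNReal.ofReal (1 + 2 / s) ^ p⁻¹.toReal * ENNReal.ofReal (1 + 2 / s) ^ p⁻¹.toReal := by
        gcongr
    _ = _ := by
        have : (0 : ℝ) < 1 + 2 / s := by positivity
        rw [← ENNReal.rpow_add_of_nonneg _ _ (by positivity) (by positivity), ← two_mul,
          ENNReal.ofReal_rpow_of_pos this]

lemma measurableSet_Gam (l : ℝ) (k : ℝ × ℝ) : MeasurableSet (Gam l k) := by
  have lower : MeasurableSet {ζ : R3 | l ≤ |ζ.1|} := measurableSet_le (by fun_prop) (by fun_prop)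
  have upper : MeasurableSet {ζ : R3 | |ζ.1| < 2 * l} :=
    measurableSet_lt (by fun_prop) (by fun_prop)
  have slope : MeasurableSet {ζ : R3 | max |ζ.2.1 / ζ.1 - k.1| |ζ.2.2 / ζ.1 - k.2| ≤ l / 2} :=
    measurableSet_le (by fun_prop) (by fun_prop)
  exact lower.inter (upper.inter slope)

lemma abs_sub_mul_le_sq_of_abs_div_sub_le {l ξ η k : ℝ} (hl : 0 < l) (hlξ : l ≤ |ξ|)
    (hξl : |ξ| < 2 * l) (hη : |η / ξ - k| ≤ l / 2) : |η - ξ * k| ≤ l ^ 2 := by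
  have hξ : ξ ≠ 0 := abs_pos.1 (hl.trans_le hlξ)
  calc |η - ξ * k| = |ξ| * |η / ξ - k| := by
        rw [← abs_mul, mul_sub, mul_div_cancel₀ _ hξ]
    _ ≤ (2 * l) * (l / 2) := by gcongr
    _ = l ^ 2 := by ring

lemma snd_mem_closedBall_of_mem_Gam {l : ℝ} (hl : 0 < l) {k : ℝ × ℝ} {ζ : R3}
    (hζ : ζ ∈ Gam l k) : ζ.2 ∈ Metric.closedBall (ζ.1 • k) (l ^ 2) := by
  obtain ⟨hlξ, hξl, hη⟩ := hζ
  rw [max_le_iff] at hη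
  exact max_le (abs_sub_mul_le_sq_of_abs_div_sub_le hl hlξ hξl hη.1)
    (abs_sub_mul_le_sq_of_abs_div_sub_le hl hlξ hξl hη.2)

lemma volume_closedBall_real_prod (x : ℝ × ℝ) {r : ℝ} (hr : 0 ≤ r) :
    volume (Metric.closedBall x r) = ENNReal.ofReal (4 * r ^ 2) := by
  rw [← closedBall_prod_same, Measure.volume_eq_prod, Measure.prod_prod, Real.volume_closedBall,
    Real.volume_closedBall, ← ENNReal.ofReal_mul (by positivity)]
  congr 1
  ring

lemma volume_Gam_le {l : ℝ} (hl : 0 < l) (k : ℝ × ℝ) :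
    volume (Gam l k) ≤ ENNReal.ofReal (16 * l ^ 5) := by
  have fibre (ξ : ℝ) : volume (Prod.mk ξ ⁻¹' Gam l k) ≤
      (Metric.closedBall 0 (2 * l)).indicator (fun _ ↦ ENNReal.ofReal (4 * (l ^ 2) ^ 2)) ξ := by
    by_cases hξ : ξ ∈ Metric.closedBall 0 (2 * l)
    · rw [Set.indicator_of_mem hξ, ← volume_closedBall_real_prod (ξ • k) (by positivity)]
      exact measure_mono fun _ ↦ snd_mem_closedBall_of_mem_Gam hl
    · have empty : Prod.mk ξ ⁻¹' Gam l k = ∅ :=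
        Set.eq_empty_of_forall_notMem fun _ hη ↦ hξ (by simpa using hη.2.1.le)
      simp [empty]
  calc volume (Gam l k) = ∫⁻ ξ : ℝ, volume (Prod.mk ξ ⁻¹' Gam l k) := by
        rw [Measure.volume_eq_prod, Measure.prod_apply (measurableSet_Gam l k)]
    _ ≤ ENNReal.ofReal (4 * (l ^ 2) ^ 2) * ENNReal.ofReal (2 * (2 * l)) := by
        grw [lintegral_mono fibre]
        rw [lintegral_indicator_const Metric.isClosed_closedBall.measurableSet,
          Real.volume_closedBall]
    _ = ENNReal.ofReal (16 * l ^ 5) := by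
        rw [← ENNReal.ofReal_mul (by positivity)]
        congr 1
        ring

lemma sq_div_two_mul_abs_le_of_abs_div_sub_le {l ξ η : ℝ} {j : ℤ} (hl : 0 < l) (hlξ : l ≤ |ξ|)
    (hη : |η / ξ - l * j| ≤ l / 2) : l ^ 2 / 2 * |(j : ℝ)| ≤ |η| := by
  rcases eq_or_ne j 0 with rfl | hj
  · simp
  have one_le_abs : (1 : ℝ) ≤ |(j : ℝ)| := mod_cast Int.one_le_abs hj
  have slope_lower : l * |(j : ℝ)| / 2 ≤ |η / ξ| := by
    have triangle := abs_sub_abs_le_abs_sub (l * (j : ℝ)) (η / ξ)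
    rw [abs_sub_comm, abs_mul, abs_of_pos hl] at triangle
    nlinarith
  calc l ^ 2 / 2 * |(j : ℝ)| = l * |(j : ℝ)| / 2 * l := by ring
    _ ≤ |η / ξ| * |ξ| := by gcongr
    _ = |η| := by rw [← abs_mul, div_mul_cancel₀ _ (abs_pos.1 (hl.trans_le hlξ))]

lemma exists_norm_schwartz_le {E F : Type*} [NormedAddCommGroup E] [NormedSpace ℝ E]
    [NormedAddCommGroup F] [NormedSpace ℝ F] (ψ : SchwartzMap E F) (N : ℕ) :
    ∃ C, 0 ≤ C ∧ ∀ x, ‖ψ x‖ ≤ C * ((1 + ‖x‖) ^ N)⁻¹ := by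
  have seminorm_bound (x : E) := by
    simpa only [norm_iteratedFDeriv_zero] using
      SchwartzMap.one_add_le_sup_seminorm_apply (𝕜 := ℝ) (m := (N, 0)) le_rfl le_rfl ψ x
  refine ⟨_, le_trans (by positivity) (seminorm_bound 0), fun x ↦ ?_⟩
  rw [← div_eq_mul_inv, le_div_iff₀' (by positivity)]
  exact seminorm_bound x

lemma exists_norm_schwartz_le_on_Gam {F : Type*} [NormedAddCommGroup F] [NormedSpace ℝ F]
    (ψ : SchwartzMap R3 F) :
    ∃ C, 0 ≤ C ∧ ∀ l > 0, ∀ m : ℤ × ℤ, ∀ ζ ∈ Gam l (l * m.1, l * m.2),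
      ‖ψ ζ‖ ≤ C * (((1 + l) ^ 6)⁻¹ * (((1 + l ^ 2 / 2 * |(m.1 : ℝ)|) ^ 2)⁻¹ *
        ((1 + l ^ 2 / 2 * |(m.2 : ℝ)|) ^ 2)⁻¹)) := by
  obtain ⟨C, C_nonneg, decay⟩ := exists_norm_schwartz_le ψ 10
  refine ⟨C, C_nonneg, fun l hl m ζ ⟨hlξ, _, hη⟩ ↦ (decay ζ).trans ?_⟩
  rw [max_le_iff] at hη
  have le₀ : l ≤ ‖ζ‖ := hlξ.trans (norm_fst_le ζ)
  have le₁ : l ^ 2 / 2 * |(m.1 : ℝ)| ≤ ‖ζ‖ :=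
    (sq_div_two_mul_abs_le_of_abs_div_sub_le hl hlξ hη.1).trans
      ((norm_fst_le ζ.2).trans (norm_snd_le ζ))
  have le₂ : l ^ 2 / 2 * |(m.2 : ℝ)| ≤ ‖ζ‖ :=
    (sq_div_two_mul_abs_le_of_abs_div_sub_le hl hlξ hη.2).trans
      ((norm_snd_le ζ.2).trans (norm_snd_le ζ))
  -- `l³ (1 + l)⁻⁶` is a power of `l / (1 + l)²`, and exponent `2` makes each lattice sum converge.
  rw [show 10 = 6 + (2 + 2) from rfl, pow_add, pow_add, mul_inv, mul_inv]
  gcongr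

lemma projG_eq_ft3_comp_neg (l : ℝ) (k : ℝ × ℝ) (φ : SchwartzMap R3 ℂ) :
    projG l k φ = ft3 ((Gam l k).indicator (ft3 φ)) ∘ Neg.neg := by
  ext z
  rw [projG, Function.comp_apply, ft3, ← integral_indicator (measurableSet_Gam l k)]
  congr! 2 with _
  rw [Set.indicator_mul_right]
  congr! 2
  simp only [Complex.ofReal_add, Complex.ofReal_mul, Prod.fst_neg, mul_neg, Prod.snd_neg,
    Complex.ofReal_neg, neg_mul]
  ring

lemma eLpNorm_two_projG_le {l B : ℝ} {k : ℝ × ℝ} {φ : SchwartzMap R3 ℂ}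
    (hG : volume (Gam l k) ≠ ∞) (hB : ∀ ζ ∈ Gam l k, ‖ft3 φ ζ‖ ≤ B) :
    eLpNorm (projG l k φ) 2 volume ≤ ENNReal.ofReal √((2 * Real.pi) ^ 3) *
      (volume (Gam l k) ^ (1 / 2 : ℝ) * ENNReal.ofReal B) := by
  obtain ⟨ψ, hψ⟩ := exists_schwartzMap_eq_ft3 φ
  have measurable_ft3 : AEStronglyMeasurable (ft3 φ) (volume.restrict (Gam l k)) :=
    hψ ▸ ψ.continuous.aestronglyMeasurable
  have bound : ∀ᵐ ζ ∂volume.restrict (Gam l k), ‖ft3 φ ζ‖ ≤ B :=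
    ae_restrict_of_forall_mem (measurableSet_Gam l k) hB
  have : IsFiniteMeasure (volume.restrict (Gam l k)) := isFiniteMeasure_restrict.2 hG
  have integrable : Integrable ((Gam l k).indicator (ft3 φ)) :=
    (integrable_indicator_iff (measurableSet_Gam l k)).2
      (Integrable.of_bound measurable_ft3 B bound)
  have memLp : MemLp ((Gam l k).indicator (ft3 φ)) 2 :=
    (memLp_indicator_iff_restrict (measurableSet_Gam l k)).2 (.of_bound measurable_ft3 B bound)
  have reflection : eLpNorm (projG l k φ) 2 volume =
      eLpNorm (ft3 ((Gam l k).indicator (ft3 φ))) 2 volume := by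
    rw [projG_eq_ft3_comp_neg]
    conv_rhs => rw [← measurePreserving_neg_R3.map_eq]
    exact ((Homeomorph.neg R3).measurableEmbedding.eLpNorm_map_measure).symm
  rw [reflection, eLpNorm_two_ft3 integrable memLp,
    eLpNorm_indicator_eq_eLpNorm_restrict (measurableSet_Gam l k)]
  gcongr
  simpa using eLpNorm_le_of_ae_bound (p := 2) bound

lemma exists_eLpNorm_two_projG_le (φ : SchwartzMap R3 ℂ) :
    ∃ D, 0 ≤ D ∧ ∀ l > 0, ∀ m : ℤ × ℤ, eLpNorm (projG l (l * m.1, l * m.2) φ) 2 volume ≤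
      ENNReal.ofReal (D * (l ^ (5 / 2 : ℝ) * ((1 + l) ^ 6)⁻¹)) *
        (latticeWeight (l ^ 2 / 2) m.1 * latticeWeight (l ^ 2 / 2) m.2) := by
  obtain ⟨ψ, hψ⟩ := exists_schwartzMap_eq_ft3 φ
  obtain ⟨C, C_nonneg, decay⟩ := exists_norm_schwartz_le_on_Gam ψ
  refine ⟨√((2 * Real.pi) ^ 3) * (4 * C), by positivity, fun l hl m ↦ ?_⟩
  have volume_le := volume_Gam_le hl (l * m.1, l * m.2)
  have sqrt_volume : (16 * l ^ 5) ^ (1 / 2 : ℝ) = 4 * l ^ (5 / 2 : ℝ) := by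
    rw [Real.mul_rpow (by norm_num) (by positivity), ← Real.rpow_natCast_mul hl.le,
      ← Real.sqrt_eq_rpow, show (16 : ℝ) = 4 ^ 2 by norm_num, Real.sqrt_sq (by norm_num)]
    norm_num
  refine (eLpNorm_two_projG_le (ne_top_of_le_ne_top ENNReal.ofReal_ne_top volume_le)
    fun ζ hζ ↦ by simpa only [hψ] using decay l hl m ζ hζ).trans ?_
  grw [volume_le]
  rw [ENNReal.ofReal_rpow_of_nonneg (by positivity) (by positivity), sqrt_volume, latticeWeight,
    latticeWeight, ← ENNReal.ofReal_mul (by positivity), ← ENNReal.ofReal_mul (by positivity),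
    ← ENNReal.ofReal_mul (by positivity), ← ENNReal.ofReal_mul (by positivity)]
  apply le_of_eq
  congr 1
  ring

lemma pow_three_mul_inv_mul_rpow_le {l a : ℝ} (hl : 0 < l) (ha₀ : 0 ≤ a) (ha : a ≤ 1) :
    l ^ 3 * ((1 + l) ^ 6)⁻¹ * (1 + 4 / l ^ 2) ^ (2 * a) ≤ 25 * (l / (1 + l) ^ 2) ^ (3 - 4 * a) := by
  -- `u ≤ min l l⁻¹`, so a power of `u` controls small and large scales at once.
  set u := l / (1 + l) ^ 2 with hu
  have u_pos : 0 < u := by positivity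
  have base_le : 1 + 4 / l ^ 2 ≤ 5 * u ^ (-2 : ℝ) := by
    rw [Real.rpow_neg u_pos.le, Real.rpow_two, hu]
    field_simp
    nlinarith [pow_pos hl 3, pow_pos hl 4]
  calc l ^ 3 * ((1 + l) ^ 6)⁻¹ * (1 + 4 / l ^ 2) ^ (2 * a)
      ≤ u ^ 3 * (5 * u ^ (-2 : ℝ)) ^ (2 * a) := by
        have : l ^ 3 * ((1 + l) ^ 6)⁻¹ = u ^ 3 := by rw [hu]; field_simp
        rw [this]
        gcongr
    _ = 5 ^ (2 * a) * (u ^ (3 : ℝ) * u ^ (-(4 * a))) := by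
        rw [Real.mul_rpow (by norm_num) (by positivity), ← Real.rpow_mul u_pos.le,
          Real.rpow_ofNat]
        ring_nf
    _ ≤ 5 ^ (2 : ℝ) * (u ^ (3 : ℝ) * u ^ (-(4 * a))) := by
        gcongr
        · norm_num
        · linarith
    _ = 25 * u ^ (3 - 4 * a) := by
        rw [← Real.rpow_add u_pos, ← sub_eq_add_neg]
        norm_num

lemma exists_rpow_half_mul_lpS_projG_le {p : ℝ≥0∞} (hp : 1 ≤ p) (φ : SchwartzMap R3 ℂ) :
    ∃ D, 0 ≤ D ∧ ∀ l > 0, ENNReal.ofReal l ^ (1 / 2 : ℝ) *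
      lpS p (fun m : ℤ × ℤ ↦ eLpNorm (projG l (l * m.1, l * m.2) φ) 2 volume) ≤
        ENNReal.ofReal (D * (l / (1 + l) ^ 2) ^ (3 - 4 * p⁻¹.toReal)) := by
  obtain ⟨D, D_nonneg, piece_le⟩ := exists_eLpNorm_two_projG_le φ
  refine ⟨25 * D, by positivity, fun l hl ↦ ?_⟩
  set a := p⁻¹.toReal
  have ha : a ≤ 1 := by
    simpa only [ENNReal.toReal_one] using
      ENNReal.toReal_mono ENNReal.one_ne_top (ENNReal.inv_le_one.2 hp)
  have lattice_sum := lpS_latticeWeight_prod_le hp (show 0 < l ^ 2 / 2 by positivity)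
  rw [show 2 / (l ^ 2 / 2) = 4 / l ^ 2 by ring] at lattice_sum
  have half_add : l ^ (1 / 2 : ℝ) * l ^ (5 / 2 : ℝ) = l ^ 3 := by
    rw [← Real.rpow_add hl]
    norm_num
  grw [lpS_mono (piece_le l hl), lpS_const_mul (one_pos.trans_le hp).ne', lattice_sum]
  rw [ENNReal.ofReal_rpow_of_pos hl, ← ENNReal.ofReal_mul (by positivity),
    ← ENNReal.ofReal_mul (by positivity)]
  refine ENNReal.ofReal_le_ofReal ?_
  calc _ = D * (l ^ (1 / 2 : ℝ) * l ^ (5 / 2 : ℝ) * ((1 + l) ^ 6)⁻¹ *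
        (1 + 4 / l ^ 2) ^ (2 * a)) := by ring
    _ ≤ D * (25 * (l / (1 + l) ^ 2) ^ (3 - 4 * a)) := by
        rw [half_add]
        exact mul_le_mul_of_nonneg_left (pow_three_mul_inv_mul_rpow_le hl ENNReal.toReal_nonneg ha)
          D_nonneg
    _ = _ := by ring

lemma two_zpow_div_sq_le (n : ℤ) : (2 : ℝ) ^ n / (1 + (2 : ℝ) ^ n) ^ 2 ≤ (1 / 2) ^ n.natAbs := by
  have two_zpow_pos : (0 : ℝ) < 2 ^ n := by positivity
  have le_self : (2 : ℝ) ^ n / (1 + (2 : ℝ) ^ n) ^ 2 ≤ 2 ^ n :=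
    div_le_self two_zpow_pos.le (one_le_pow₀ (by linarith))
  have le_inv : (2 : ℝ) ^ n / (1 + (2 : ℝ) ^ n) ^ 2 ≤ (2 ^ n)⁻¹ := by
    rw [div_le_iff₀ (by positivity), inv_mul_eq_div, le_div_iff₀ two_zpow_pos, ← sq]
    gcongr
    linarith
  obtain ⟨N, rfl | rfl⟩ := n.eq_nat_or_neg
  · simpa using le_inv
  · simpa using le_self

lemma ennreal_two_zpow_eq_ofReal (n : ℤ) : (2 : ℝ≥0∞) ^ n = ENNReal.ofReal (2 ^ n) := by
  rw [← ENNReal.coe_ofNat, ← ENNReal.coe_zpow two_ne_zero, ← ENNReal.ofReal_coe_nnreal]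
  norm_num

theorem schwartz_mem_lqlp_general (q p : ℝ≥0∞) (hq : q ≠ 0) (hp : 4 / 3 < p)
    (φ : SchwartzMap R3 ℂ) : lqlpNorm q p φ ≠ ⊤ := by
  have one_le_p : 1 ≤ p := by
    refine le_trans ?_ hp.le
    rw [ENNReal.le_div_iff_mul_le (by simp) (by simp)]
    norm_num
  have exponent_pos : 0 < 3 - 4 * p⁻¹.toReal := by
    have inv_lt : p⁻¹.toReal < 3 / 4 := by
      simpa using ENNReal.toReal_strict_mono (by simp) (ENNReal.inv_lt_inv.2 hp)
    linarith
  obtain ⟨D, D_nonneg, shell_le⟩ := exists_rpow_half_mul_lpS_projG_le one_le_p φ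
  have ratio_lt_one : ENNReal.ofReal ((1 / 2) ^ (3 - 4 * p⁻¹.toReal)) < 1 :=
    ENNReal.ofReal_lt_one.2 (Real.rpow_lt_one (by norm_num) (by norm_num) exponent_pos)
  refine lpS_ne_top_of_le_geometric hq (ENNReal.ofReal_ne_top (r := D)) ratio_lt_one fun n ↦ ?_
  rw [ennreal_two_zpow_eq_ofReal]
  grw [shell_le _ (by positivity), two_zpow_div_sq_le]
  rw [ENNReal.ofReal_mul D_nonneg, ← ENNReal.ofReal_pow (by positivity),
    Real.rpow_pow_comm (by norm_num)]

/-!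
STATEMENT 15: for 1 ≤ q ≤ ∞ and 4/3 < p < ∞, every Schwartz function on ℝ³
has finite l^q l^p L² norm, i.e. the Schwartz functions are contained in l^q l^p L².
-/
theorem schwartz_mem_lqlp (q p : ℝ≥0∞) (hq : 1 ≤ q) (hp1 : 4 / 3 < p) (hp2 : p ≠ ∞)
    (φ : SchwartzMap R3 ℂ) : lqlpNorm q p φ ≠ ⊤ :=
  schwartz_mem_lqlp_general q p (one_pos.trans_le hq).ne' hp1 φ
end
end

section
/- Fix 1 < p < ∞. For dyadic λ ∈ 2^ℤ let f_λ : ℝ → ℝ be defined by its Fourier transform f̂_λ(ξ) = λ^{−1} for λ ≤ |ξ| < 2λ and f̂_λ(ξ) = 0 otherwise, and for 0 < μ ≤ 1/4 set φ_μ = |ln μ|^{−1/p} ∑_{λ∈2^ℤ, μ² ≤ λ ≤ μ} f_λ. Then there exist constants c, C > 0 (depending only on p) such that for all 0 < μ ≤ 1/4: (a) c ≤ ( ∑_{λ∈2^ℤ} λ^{p/2} ‖(φ_μ)_λ‖_{L²(ℝ)}^p )^{1/p} ≤ C, where (φ_μ)_λ denotes the Fourier projection to {λ ≤ |ξ| <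 2λ}; and (b) for every Schwartz function ψ on ℝ whose Fourier transform is supported in [−2,2] and equals 1 on [−1,1], one has ∫_ℝ ψ φ_μ dx ≥ c_ψ |ln μ|^{1−1/p} for all sufficiently small μ, for some constant c_ψ > 0. -/
/-!
STATEMENT 16: the explicit Besov example. For λ ∈ 2^ℤ, f_λ has Fourier
transform λ^{-1} on {λ ≤ |ξ| < 2λ} (so f_λ is the corresponding inverse
Fourier integral), and φ_μ = |ln μ|^{-1/p} ∑_{μ² ≤ λ ≤ μ} f_λ. The dyadic
(Fourier) projection of φ_μ to {λ ≤ |ξ| < 2λ}, λ = 2^n, is exactly the n-th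
summand `phimuPiece p μ n`. Claim (a): the homogeneous Ḃ^{1/2}_{2,p} norm of
φ_μ is bounded above and below by constants depending only on p, for
0 < μ ≤ 1/4. Claim (b): pairing with any Schwartz ψ whose Fourier transform
is supported in [−2,2] and ≡ 1 on [−1,1] grows like |ln μ|^{1−1/p}.
-/

noncomputable section

open MeasureTheory
open scoped ENNReal

/-- One-dimensional (nonunitary) Fourier transform. -/
def ft1 (f : ℝ → ℂ) (ξ : ℝ) : ℂ :=
  ∫ x : ℝ, Complex.exp (-Complex.I * ((x * ξ : ℝ) : ℂ)) * f x

/-- f_λ : the inverse Fourier integral of λ^{-1} 1_{{λ ≤ |ξ| < 2λ}}. -/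
def fl (l : ℝ) (x : ℝ) : ℂ :=
  ∫ ξ in {ξ : ℝ | l ≤ |ξ| ∧ |ξ| < 2 * l},
    ((l⁻¹ : ℝ) : ℂ) * Complex.exp (Complex.I * ((x * ξ : ℝ) : ℂ))

/-- The dyadic piece of φ_μ at frequency λ = 2^n (its Fourier projection to
{2^n ≤ |ξ| < 2^{n+1}}). -/
def phimuPiece (p μ : ℝ) (n : ℤ) : ℝ → ℂ := fun x =>
  if μ ^ 2 ≤ (2 : ℝ) ^ n ∧ (2 : ℝ) ^ n ≤ μ then
    ((|Real.log μ| ^ (-(1 / p)) : ℝ) : ℂ) * fl ((2 : ℝ) ^ n) x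
  else 0

/-- φ_μ = |ln μ|^{-1/p} ∑_{λ ∈ 2^ℤ, μ² ≤ λ ≤ μ} f_λ. -/
def phimu (p μ : ℝ) (x : ℝ) : ℂ := ∑' n : ℤ, phimuPiece p μ n x

/-!
Explicitly `f_λ(x) = 4 sinc(2λx) - 2 sinc(λx)`, so `f_λ` is the `L^∞`-normalized dilate of `f_1`,
`f_1 ∈ L²` is nonzero, and `λ^{1/2} ‖f_λ‖_{L²} = ‖f_1‖_{L²}` for every `λ`. There are `N ≈ |ln μ|`
dyadic numbers in `[μ², μ]`, hence the Besov norm of `φ_μ` is exactly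
`(N / |ln μ|)^{1/p} ‖f_1‖_{L²}`. On the other hand, if `ψ̂ = 1` on `(-2μ, 2μ)` then Fubini gives
`∫ ψ f_λ = λ⁻¹ |{λ ≤ |ξ| < 2λ}| = 2` for each of the `N` frequencies, so that
`∫ ψ φ_μ = 2 N |ln μ|^{-1/p}`.
-/

section Sinc

open Real

lemma mul_sinc (x : ℝ) : x * sinc x = sin x := by
  rcases eq_or_ne x 0 with rfl | hx
  · simp
  · rw [sinc_of_ne_zero hx, mul_div_cancel₀ _ hx]

lemma sinc_sq_le (x : ℝ) : sinc x ^ 2 ≤ 2 * (1 + x ^ 2)⁻¹ := by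
  have near_zero : sinc x ^ 2 ≤ 1 := (sq_le_one_iff_abs_le_one _).2 (abs_sinc_le_one x)
  have at_infinity : (x * sinc x) ^ 2 ≤ 1 := mul_sinc x ▸ sin_sq_le_one x
  rw [← div_eq_mul_inv, le_div_iff₀ (by positivity)]
  linarith

lemma memLp_two_sinc : MemLp sinc 2 := by
  rw [memLp_two_iff_integrable_sq continuous_sinc.aestronglyMeasurable]
  refine (integrable_inv_one_add_sq.const_mul 2).mono'
    (continuous_sinc.pow 2).aestronglyMeasurable (.of_forall fun x ↦ ?_)
  simpa only [norm_of_nonneg (sq_nonneg (sinc x))] using sinc_sq_le x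

lemma setIntegral_Ioo_neg_exp_I_mul (x : ℝ) {r : ℝ} (hr : 0 ≤ r) :
    ∫ ξ in Set.Ioo (-r) r, Complex.exp (Complex.I * ((x * ξ : ℝ) : ℂ)) =
      2 * r * sinc (r * x) := by
  rw [← integral_Ioc_eq_integral_Ioo, ← intervalIntegral.integral_of_le (by linarith)]
  rcases eq_or_ne x 0 with rfl | hx
  · simp [two_mul]
  have rescale := intervalIntegral.smul_integral_comp_mul_left (a := -r) (b := r)
    (fun t : ℝ ↦ Complex.exp (t * Complex.I)) x
  rw [mul_neg, integral_exp_mul_I_eq_sinc, Complex.real_smul] at rescale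
  refine mul_left_cancel₀ (Complex.ofReal_ne_zero.2 hx) ?_
  simp only [mul_comm Complex.I, rescale, mul_comm r x]
  push_cast
  ring

end Sinc

section Dilation

variable {E : Type*} [NormedAddCommGroup E]

lemma eLpNorm_comp_mul_left (f : ℝ → E) (q : ℝ≥0∞) {a : ℝ} (ha : a ≠ 0) :
    eLpNorm (fun x ↦ f (a * x)) q =
      ENNReal.ofReal |a⁻¹| ^ (1 / q).toReal * eLpNorm f q := by
  have scale_ne_zero : ENNReal.ofReal |a⁻¹| ≠ 0 := by simpa using ha
  have := (measurableEmbedding_mulLeft₀ ha).eLpNorm_map_measure (g := f) (p := q) (μ := volume)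
  rw [Real.map_volume_mul_left ha, eLpNorm_smul_measure_of_ne_zero scale_ne_zero] at this
  exact this.symm

lemma memLp_comp_mul_left {f : ℝ → E} {q : ℝ≥0∞} (hf : MemLp f q) {a : ℝ} (ha : a ≠ 0) :
    MemLp (fun x ↦ f (a * x)) q := by
  refine (measurableEmbedding_mulLeft₀ ha).memLp_map_measure_iff.1 ?_
  rw [Real.map_volume_mul_left ha]
  exact hf.smul_measure ENNReal.ofReal_ne_top

end Dilation

/-- The frequency annulus `{l ≤ |ξ| < 2l}` carrying the Fourier transform of `fl l`. -/
def annulus (l : ℝ) : Set ℝ := {ξ | l ≤ |ξ| ∧ |ξ| < 2 * l}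

section Annulus

lemma annulus_eq_diff (l : ℝ) :
    annulus l = Set.Ioo (-(2 * l)) (2 * l) \ Set.Ioo (-l) l := by
  ext ξ
  rw [annulus, Set.mem_ofPred_eq, Set.mem_sdiff, Set.mem_Ioo, Set.mem_Ioo, ← abs_lt, ← abs_lt,
    not_lt, and_comm]

lemma measurableSet_annulus (l : ℝ) : MeasurableSet (annulus l) := by
  rw [annulus_eq_diff]
  exact measurableSet_Ioo.diff measurableSet_Ioo

variable {l : ℝ}

lemma Ioo_neg_subset_Ioo_neg_two_mul (hl : 0 ≤ l) :
    Set.Ioo (-l) l ⊆ Set.Ioo (-(2 * l)) (2 * l) :=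
  Set.Ioo_subset_Ioo (by linarith) (by linarith)

lemma volume_annulus (hl : 0 ≤ l) : volume (annulus l) = ENNReal.ofReal (2 * l) := by
  rw [annulus_eq_diff, measure_sdiff (Ioo_neg_subset_Ioo_neg_two_mul hl)
    measurableSet_Ioo.nullMeasurableSet (by simp), Real.volume_Ioo, Real.volume_Ioo,
    ← ENNReal.ofReal_sub _ (by linarith)]
  congr 1
  ring

end Annulus

section Bump

variable {l : ℝ}

lemma fl_eq_sinc (hl : 0 < l) (x : ℝ) :
    fl l x = ((4 * Real.sinc (2 * (l * x)) - 2 * Real.sinc (l * x) : ℝ) : ℂ) := by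
  have exp_integrable : IntegrableOn
      (fun ξ : ℝ ↦ Complex.exp (Complex.I * ((x * ξ : ℝ) : ℂ))) (Set.Ioo (-(2 * l)) (2 * l)) :=
    (Continuous.integrableOn_Icc (by fun_prop)).mono_set Set.Ioo_subset_Icc_self
  change ∫ ξ in annulus l, _ = _
  rw [integral_const_mul, annulus_eq_diff, setIntegral_sdiff measurableSet_Ioo exp_integrable
    (Ioo_neg_subset_Ioo_neg_two_mul hl.le), setIntegral_Ioo_neg_exp_I_mul x (by positivity),
    setIntegral_Ioo_neg_exp_I_mul x hl.le, mul_assoc 2 l x]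
  have : (l : ℂ) ≠ 0 := Complex.ofReal_ne_zero.2 hl.ne'
  push_cast
  field

lemma fl_eq_fl_one_comp (hl : 0 < l) : fl l = fun x ↦ fl 1 (l * x) := by
  funext x
  rw [fl_eq_sinc hl, fl_eq_sinc one_pos, one_mul]

lemma continuous_fl (hl : 0 < l) : Continuous (fl l) := by
  rw [funext (fl_eq_sinc hl)]
  have := Real.continuous_sinc
  fun_prop

lemma norm_fl_le (hl : 0 < l) (x : ℝ) : ‖fl l x‖ ≤ 6 := by
  have outer := abs_le.1 (Real.abs_sinc_le_one (2 * (l * x)))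
  have inner := abs_le.1 (Real.abs_sinc_le_one (l * x))
  rw [fl_eq_sinc hl, Complex.norm_real, Real.norm_eq_abs, abs_le]
  constructor <;> linarith

lemma memLp_two_fl_one : MemLp (fl 1) 2 := by
  rw [funext (fl_eq_sinc one_pos)]
  simp only [one_mul]
  exact (((memLp_comp_mul_left memLp_two_sinc two_ne_zero).const_mul 4).sub
    (memLp_two_sinc.const_mul 2)).ofReal

lemma eLpNorm_fl_one_ne_zero : eLpNorm (fl 1) 2 ≠ 0 := by
  intro norm_zero
  have ae_zero := (eLpNorm_eq_zero_iff
    (continuous_fl one_pos).aestronglyMeasurable two_ne_zero).1 norm_zero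
  have eq_zero := ((continuous_fl one_pos).ae_eq_iff_eq volume continuous_zero).1 ae_zero
  have value_zero : fl 1 0 = 2 := by norm_num [fl_eq_sinc one_pos]
  simp [eq_zero] at value_zero

lemma rpow_half_mul_eLpNorm_fl (hl : 0 < l) :
    ENNReal.ofReal l ^ ((1 : ℝ) / 2) * eLpNorm (fl l) 2 = eLpNorm (fl 1) 2 := by
  have half : (1 / 2 : ℝ≥0∞).toReal = (1 : ℝ) / 2 := by simp
  rw [fl_eq_fl_one_comp hl, eLpNorm_comp_mul_left _ _ hl.ne', half, ← mul_assoc,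
    ← ENNReal.mul_rpow_of_nonneg _ _ (by norm_num), ← ENNReal.ofReal_mul hl.le,
    abs_of_pos (inv_pos.2 hl), mul_inv_cancel₀ hl.ne', ENNReal.ofReal_one, ENNReal.one_rpow,
    one_mul]

end Bump

section Pairing

variable {ψ : ℝ → ℂ}

lemma ft1_neg (ψ : ℝ → ℂ) (ξ : ℝ) :
    ft1 ψ (-ξ) = ∫ x, Complex.exp (Complex.I * ((x * ξ : ℝ) : ℂ)) * ψ x := by
  simp [ft1]

lemma integral_mul_integral_exp_I_mul (hψ : Integrable ψ) (ν : Measure ℝ) [IsFiniteMeasure ν] :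
    ∫ x, ψ x * ∫ ξ, Complex.exp (Complex.I * ((x * ξ : ℝ) : ℂ)) ∂ν = ∫ ξ, ft1 ψ (-ξ) ∂ν := by
  have duality := VectorFourier.integral_fourierIntegral_smul_eq_flip (L := -LinearMap.mul ℝ ℝ)
    (μ := volume) (ν := ν) (f := ψ) (g := fun _ ↦ (1 : ℂ)) Real.continuous_probChar
    (by simp only [LinearMap.neg_apply, LinearMap.mul_apply_apply]; fun_prop) hψ
    (integrable_const 1)
  simp only [VectorFourier.fourierIntegral_probChar] at duality
  simpa [ft1_neg, mul_comm Complex.I] using duality.symm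

lemma integrable_mul_fl (hψ : Integrable ψ) {l : ℝ} (hl : 0 < l) :
    Integrable fun x ↦ ψ x * fl l x :=
  hψ.mul_bdd (continuous_fl hl).aestronglyMeasurable (.of_forall (norm_fl_le hl))

lemma integral_mul_fl (hψ : Integrable ψ) {l : ℝ} (hl : 0 < l)
    (hft : ∀ ξ, |ξ| < 2 * l → ft1 ψ ξ = 1) : ∫ x, ψ x * fl l x = 2 := by
  have : IsFiniteMeasure (volume.restrict (annulus l)) :=
    isFiniteMeasure_restrict.2 (volume_annulus hl.le ▸ ENNReal.ofReal_ne_top)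
  have ft1_eq_one : ∀ ξ ∈ annulus l, ft1 ψ (-ξ) = 1 := fun ξ hξ ↦ hft _ (by simpa using hξ.2)
  calc ∫ x, ψ x * fl l x
      = (l⁻¹ : ℝ) * ∫ x, ψ x * ∫ ξ in annulus l, Complex.exp (Complex.I * ((x * ξ : ℝ) : ℂ)) := by
        rw [← integral_const_mul]
        refine integral_congr_ae (.of_forall fun x ↦ ?_)
        simp only [fl, integral_const_mul, annulus]
        ring
    _ = (l⁻¹ : ℝ) * ∫ ξ in annulus l, ft1 ψ (-ξ) := by
        rw [integral_mul_integral_exp_I_mul hψ]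
    _ = (l⁻¹ : ℝ) * (2 * l : ℝ) := by
        rw [setIntegral_congr_fun (measurableSet_annulus l) ft1_eq_one]
        simp [Measure.real, volume_annulus hl.le, hl.le]
    _ = 2 := by
        have : (l : ℂ) ≠ 0 := Complex.ofReal_ne_zero.2 hl.ne'
        push_cast
        field

end Pairing

section Counting

lemma sub_sub_one_le_card_Icc_ceil_floor (a b : ℝ) :
    b - a - 1 ≤ (Finset.Icc ⌈a⌉ ⌊b⌋).card := by
  have card_ge : ⌊b⌋ + 1 - ⌈a⌉ ≤ ((Finset.Icc ⌈a⌉ ⌊b⌋).card : ℤ) := by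
    rw [Int.card_Icc]
    exact Int.self_le_toNat _
  have card_ge' : (⌊b⌋ : ℝ) + 1 - ⌈a⌉ ≤ (Finset.Icc ⌈a⌉ ⌊b⌋).card := mod_cast card_ge
  linarith [Int.lt_floor_add_one b, Int.ceil_lt_add_one a]

lemma card_Icc_ceil_floor_le {a b : ℝ} (hab : a ≤ b) :
    ((Finset.Icc ⌈a⌉ ⌊b⌋).card : ℝ) ≤ b - a + 1 := by
  have ceil_le : ⌈a⌉ ≤ ⌊b⌋ + 1 :=
    Int.ceil_le.2 (by push_cast; exact hab.trans (Int.lt_floor_add_one b).le)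
  have card_eq : ((Finset.Icc ⌈a⌉ ⌊b⌋).card : ℝ) = ⌊b⌋ + 1 - ⌈a⌉ :=
    mod_cast Int.card_Icc_of_le _ _ ceil_le
  linarith [Int.floor_le b, Int.le_ceil a]

/-- The exponents `n` of the dyadic frequencies `2 ^ n` in `[μ ^ 2, μ]`, for `0 < μ`. -/
def dyadicWindow (μ : ℝ) : Finset ℤ := Finset.Icc ⌈2 * Real.logb 2 μ⌉ ⌊Real.logb 2 μ⌋

variable {μ : ℝ}

lemma mem_dyadicWindow (hμ : 0 < μ) {n : ℤ} :
    n ∈ dyadicWindow μ ↔ μ ^ 2 ≤ (2 : ℝ) ^ n ∧ (2 : ℝ) ^ n ≤ μ := by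
  rw [dyadicWindow, Finset.mem_Icc, Int.ceil_le, Int.le_floor, ← Real.rpow_intCast,
    Real.le_logb_iff_rpow_le one_lt_two hμ,
    ← Real.logb_le_iff_le_rpow one_lt_two (by positivity), Real.logb_pow, Nat.cast_ofNat]

lemma two_le_neg_logb_two (hμ : 0 < μ) (hμ' : μ ≤ 1 / 4) : 2 ≤ -Real.logb 2 μ := by
  have : Real.logb 2 μ ≤ -2 := by
    rw [Real.logb_le_iff_le_rpow one_lt_two hμ]
    norm_num at hμ' ⊢
    exact hμ'
  linarith

lemma abs_log_eq_neg_logb_two_mul (hμ : 0 < μ) (hμ' : μ ≤ 1) :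
    |Real.log μ| = -Real.logb 2 μ * Real.log 2 := by
  rw [abs_of_nonpos (Real.log_nonpos hμ.le hμ'), neg_mul, Real.logb,
    div_mul_cancel₀ _ (Real.log_pos one_lt_two).ne']

lemma abs_log_pos (hμ : 0 < μ) (hμ' : μ < 1) : 0 < |Real.log μ| :=
  abs_pos.2 (Real.log_neg hμ hμ').ne

lemma half_abs_log_le_card_dyadicWindow (hμ : 0 < μ) (hμ' : μ ≤ 1 / 4) :
    |Real.log μ| / 2 ≤ (dyadicWindow μ).card := by
  have card_ge := sub_sub_one_le_card_Icc_ceil_floor (2 * Real.logb 2 μ) (Real.logb 2 μ)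
  have logb_ge := two_le_neg_logb_two hμ hμ'
  rw [abs_log_eq_neg_logb_two_mul hμ (by linarith), dyadicWindow]
  nlinarith [Real.log_two_lt_d9]

lemma card_dyadicWindow_le (hμ : 0 < μ) (hμ' : μ ≤ 1 / 4) :
    ((dyadicWindow μ).card : ℝ) ≤ 3 * |Real.log μ| := by
  have logb_ge := two_le_neg_logb_two hμ hμ'
  have card_le := card_Icc_ceil_floor_le (a := 2 * Real.logb 2 μ) (b := Real.logb 2 μ)
    (by linarith)
  rw [abs_log_eq_neg_logb_two_mul hμ (by linarith), dyadicWindow]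
  nlinarith [Real.log_two_gt_d9]

end Counting

/-- The `Ḃ^{1/2}_{2,p}` norm of the function with Littlewood–Paley pieces `F n`, where `F n` is
localized at frequency `2 ^ n`. -/
def besovHalfNorm (p : ℝ) (F : ℤ → ℝ → ℂ) : ℝ≥0∞ :=
  (∑' n : ℤ, (((2 : ℝ≥0∞) ^ n) ^ ((1 : ℝ) / 2) * eLpNorm (F n) 2 volume) ^ p) ^ (1 / p)

lemma besovHalfNorm_eq_of_const {p : ℝ} (hp : 0 < p) {F : ℤ → ℝ → ℂ} (s : Finset ℤ) {A : ℝ≥0∞}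
    (hF : ∀ n ∈ s, ((2 : ℝ≥0∞) ^ n) ^ ((1 : ℝ) / 2) * eLpNorm (F n) 2 volume = A)
    (hF' : ∀ n ∉ s, F n = 0) :
    besovHalfNorm p F = (s.card : ℝ≥0∞) ^ (1 / p) * A := by
  have sum_eq : ∑' n : ℤ, (((2 : ℝ≥0∞) ^ n) ^ ((1 : ℝ) / 2) * eLpNorm (F n) 2 volume) ^ p =
      s.card * A ^ p := by
    rw [tsum_eq_sum (s := s) fun n hn ↦ by simp [hF' n hn, hp],
      Finset.sum_congr rfl fun n hn ↦ by rw [hF n hn], Finset.sum_const, nsmul_eq_mul]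
  rw [besovHalfNorm, sum_eq, ENNReal.mul_rpow_of_nonneg _ _ (by positivity), ← ENNReal.rpow_mul,
    mul_one_div_cancel hp.ne', ENNReal.rpow_one]

section Phimu

variable {p μ : ℝ} {n : ℤ}

lemma phimuPiece_of_mem (hμ : 0 < μ) (hn : n ∈ dyadicWindow μ) :
    phimuPiece p μ n = ((|Real.log μ| ^ (-(1 / p)) : ℝ) : ℂ) • fl ((2 : ℝ) ^ n) :=
  funext fun _ ↦ if_pos ((mem_dyadicWindow hμ).1 hn)

lemma phimuPiece_of_notMem (hμ : 0 < μ) (hn : n ∉ dyadicWindow μ) : phimuPiece p μ n = 0 :=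
  funext fun _ ↦ if_neg (mt (mem_dyadicWindow hμ).2 hn)

lemma two_zpow_eq_ofReal (n : ℤ) : (2 : ℝ≥0∞) ^ n = ENNReal.ofReal ((2 : ℝ) ^ n) := by
  rw [← Real.rpow_intCast, ← ENNReal.ofReal_rpow_of_pos two_pos, ENNReal.rpow_intCast,
    ENNReal.ofReal_ofNat]

lemma besovHalfNorm_phimuPiece (hp : 0 < p) (hμ : 0 < μ) :
    besovHalfNorm p (phimuPiece p μ) =
      ENNReal.ofReal (((dyadicWindow μ).card / |Real.log μ|) ^ (1 / p) *
        (eLpNorm (fl 1) 2).toReal) := by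
  have piece_norm : ∀ n ∈ dyadicWindow μ,
      ((2 : ℝ≥0∞) ^ n) ^ ((1 : ℝ) / 2) * eLpNorm (phimuPiece p μ n) 2 volume =
        ENNReal.ofReal (|Real.log μ| ^ (-(1 / p))) * eLpNorm (fl 1) 2 := fun n hn ↦ by
    rw [phimuPiece_of_mem hμ hn, eLpNorm_const_smul, mul_left_comm, two_zpow_eq_ofReal,
      rpow_half_mul_eLpNorm_fl (by positivity), ← ofReal_norm, Complex.norm_real,
      Real.norm_of_nonneg (by positivity)]
  have ratio_rpow : ((dyadicWindow μ).card / |Real.log μ|) ^ (1 / p) =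
      ((dyadicWindow μ).card : ℝ) ^ (1 / p) * |Real.log μ| ^ (-(1 / p)) := by
    rw [Real.div_rpow (by positivity) (by positivity), Real.rpow_neg (by positivity),
      div_eq_mul_inv (_ ^ _)]
  have card_rpow : ((dyadicWindow μ).card : ℝ≥0∞) ^ (1 / p) =
      ENNReal.ofReal (((dyadicWindow μ).card : ℝ) ^ (1 / p)) := by
    rw [← ENNReal.ofReal_rpow_of_nonneg (by positivity) (by positivity), ENNReal.ofReal_natCast]
  rw [besovHalfNorm_eq_of_const hp _ piece_norm fun n ↦ phimuPiece_of_notMem hμ, ratio_rpow,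
    card_rpow, mul_assoc, ENNReal.ofReal_mul (by positivity), ENNReal.ofReal_mul (by positivity),
    ENNReal.ofReal_toReal memLp_two_fl_one.eLpNorm_ne_top]

lemma phimu_eq_sum (hμ : 0 < μ) (x : ℝ) :
    phimu p μ x =
      ((|Real.log μ| ^ (-(1 / p)) : ℝ) : ℂ) * ∑ n ∈ dyadicWindow μ, fl ((2 : ℝ) ^ n) x := by
  rw [phimu, tsum_eq_sum fun n hn ↦ congrFun (phimuPiece_of_notMem hμ hn) x, Finset.mul_sum]
  exact Finset.sum_congr rfl fun n hn ↦ congrFun (phimuPiece_of_mem hμ hn) x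

lemma integral_mul_phimu {ψ : ℝ → ℂ} (hψ : Integrable ψ) (hμ : 0 < μ)
    (hft : ∀ ξ, |ξ| < 2 * μ → ft1 ψ ξ = 1) :
    ∫ x, ψ x * phimu p μ x =
      ((|Real.log μ| ^ (-(1 / p)) * (2 * (dyadicWindow μ).card) : ℝ) : ℂ) := by
  have pairing_fl : ∀ n ∈ dyadicWindow μ, ∫ x, ψ x * fl ((2 : ℝ) ^ n) x = 2 := fun n hn ↦
    integral_mul_fl hψ (by positivity) fun ξ hξ ↦
      hft ξ (by linarith [((mem_dyadicWindow hμ).1 hn).2])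
  calc ∫ x, ψ x * phimu p μ x
      = (|Real.log μ| ^ (-(1 / p)) : ℝ) *
          ∫ x, ∑ n ∈ dyadicWindow μ, ψ x * fl ((2 : ℝ) ^ n) x := by
        simp only [phimu_eq_sum hμ, ← Finset.mul_sum, ← integral_const_mul, mul_left_comm (ψ _)]
    _ = (|Real.log μ| ^ (-(1 / p)) : ℝ) * ∑ _n ∈ dyadicWindow μ, (2 : ℂ) := by
        rw [integral_finsetSum _ fun n _ ↦ integrable_mul_fl hψ (by positivity),
          Finset.sum_congr rfl pairing_fl]
    _ = _ := by
        push_cast [Finset.sum_const, nsmul_eq_mul]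
        ring

end Phimu

theorem exists_besovHalfNorm_phimuPiece_bounds {p : ℝ} (hp : 0 < p) :
    ∃ c C : ℝ, 0 < c ∧ 0 < C ∧ ∀ μ : ℝ, 0 < μ → μ ≤ 1 / 4 →
      ENNReal.ofReal c ≤ besovHalfNorm p (phimuPiece p μ) ∧
        besovHalfNorm p (phimuPiece p μ) ≤ ENNReal.ofReal C := by
  have norm_pos : 0 < (eLpNorm (fl 1) 2).toReal :=
    ENNReal.toReal_pos eLpNorm_fl_one_ne_zero memLp_two_fl_one.eLpNorm_ne_top
  refine ⟨(1 / 2 : ℝ) ^ (1 / p) * (eLpNorm (fl 1) 2).toReal,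
    (3 : ℝ) ^ (1 / p) * (eLpNorm (fl 1) 2).toReal, by positivity, by positivity,
    fun μ hμ hμ' ↦ ?_⟩
  have log_pos := abs_log_pos hμ (by linarith)
  have ratio_ge : 1 / 2 ≤ (dyadicWindow μ).card / |Real.log μ| := by
    rw [le_div_iff₀ log_pos]
    linarith [half_abs_log_le_card_dyadicWindow hμ hμ']
  have ratio_le : (dyadicWindow μ).card / |Real.log μ| ≤ 3 :=
    (div_le_iff₀ log_pos).2 (card_dyadicWindow_le hμ hμ')
  rw [besovHalfNorm_phimuPiece hp hμ]
  constructor <;> gcongr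

theorem abs_log_rpow_le_re_integral_mul_phimu (p : ℝ) {ψ : ℝ → ℂ} (hψ : Integrable ψ) {μ : ℝ}
    (hμ : 0 < μ) (hμ' : μ ≤ 1 / 4) (hft : ∀ ξ, |ξ| < 2 * μ → ft1 ψ ξ = 1) :
    |Real.log μ| ^ (1 - 1 / p) ≤ (∫ x, ψ x * phimu p μ x).re := by
  rw [integral_mul_phimu hψ hμ hft, Complex.ofReal_re]
  calc |Real.log μ| ^ (1 - 1 / p) = |Real.log μ| ^ (-(1 / p)) * |Real.log μ| := by
        rw [← Real.rpow_add_one (abs_log_pos hμ (by linarith)).ne', neg_add_eq_sub]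
    _ ≤ |Real.log μ| ^ (-(1 / p)) * (2 * (dyadicWindow μ).card) := by
        gcongr
        linarith [half_abs_log_le_card_dyadicWindow hμ hμ']

theorem besov_example_general (p : ℝ) (hp : 0 < p) :
    (∃ c C : ℝ, 0 < c ∧ 0 < C ∧ ∀ μ : ℝ, 0 < μ → μ ≤ 1 / 4 →
      ENNReal.ofReal c ≤ besovHalfNorm p (phimuPiece p μ) ∧
        besovHalfNorm p (phimuPiece p μ) ≤ ENNReal.ofReal C) ∧
    (∀ ψ : ℝ → ℂ, Integrable ψ → ∀ μ : ℝ, 0 < μ → μ ≤ 1 / 4 →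
      (∀ ξ, |ξ| < 2 * μ → ft1 ψ ξ = 1) →
        |Real.log μ| ^ (1 - 1 / p) ≤ (∫ x : ℝ, ψ x * phimu p μ x).re) :=
  ⟨exists_besovHalfNorm_phimuPiece_bounds hp, fun _ hψ _ hμ hμ' hft ↦
    abs_log_rpow_le_re_integral_mul_phimu p hψ hμ hμ' hft⟩

theorem besov_example (p : ℝ) (hp : 1 < p) :
    -- (a) uniform two-sided bound for the Ḃ^{1/2}_{2,p} norm of φ_μ
    (∃ c C : ℝ, 0 < c ∧ 0 < C ∧ ∀ μ : ℝ, 0 < μ → μ ≤ 1 / 4 →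
      ENNReal.ofReal c ≤
          (∑' n : ℤ, (((2 : ℝ≥0∞) ^ n) ^ ((1 : ℝ) / 2) *
            eLpNorm (phimuPiece p μ n) 2 volume) ^ p) ^ (1 / p) ∧
        (∑' n : ℤ, (((2 : ℝ≥0∞) ^ n) ^ ((1 : ℝ) / 2) *
            eLpNorm (phimuPiece p μ n) 2 volume) ^ p) ^ (1 / p) ≤ ENNReal.ofReal C) ∧
    -- (b) divergence of the pairing with suitable Schwartz functions
    (∀ ψ : SchwartzMap ℝ ℂ,
      (∀ ξ : ℝ, ft1 (fun x => ψ x) ξ ≠ 0 → ξ ∈ Set.Icc (-2 : ℝ) 2) →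
      (∀ ξ ∈ Set.Icc (-1 : ℝ) 1, ft1 (fun x => ψ x) ξ = 1) →
      ∃ cψ : ℝ, 0 < cψ ∧ ∃ μ₀ : ℝ, 0 < μ₀ ∧ ∀ μ : ℝ, 0 < μ → μ ≤ μ₀ →
        cψ * |Real.log μ| ^ (1 - 1 / p) ≤ (∫ x : ℝ, ψ x * phimu p μ x).re) := by
  exact (besov_example_general p (by linarith)).imp id fun pairing_bound ψ _ hft ↦
    ⟨1, one_pos, 1 / 4, by norm_num, fun μ hμ hμ' ↦ (one_mul _).trans_le <|
      pairing_bound ψ ψ.integrable μ hμ hμ' fun ξ hξ ↦ hft ξ (abs_le.1 (by linarith))⟩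
end
end

section
/- Define the KP-II resonance function R(ξ,ξ₁,η,η₁) = −3 ξ ξ₁ (ξ−ξ₁) − ( ξ ξ₁/(ξ−ξ₁) ) · | η/ξ − η₁/ξ₁ |² for ξ, ξ₁, ξ−ξ₁ ≠ 0, η, η₁ ∈ ℝ². There exist constants c, C > 0 such that for all real λ ≥ 16 and 0 < μ ≤ 1 the following holds: whenever ξ₁ ∈ [μ/2, μ], ξ − ξ₁ ∈ [λ + μ/2, λ + μ], η₁ ∈ [λμ/2, 2λμ]² and η − η₁ ∈ [λμ/2, 2λμ]², one has c λ² μ ≤ |R(ξ,ξ₁,η,η₁)| ≤ C λ² μ. -/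
/-!
STATEMENT 17: two-sided bound for the KP-II resonance function
R(ξ,ξ₁,η,η₁) = −3ξξ₁(ξ−ξ₁) − (ξξ₁/(ξ−ξ₁))|η/ξ − η₁/ξ₁|²
on the interaction region: there are universal constants c, C > 0 such that
for λ ≥ 16, 0 < μ ≤ 1, ξ₁ ∈ [μ/2,μ], ξ−ξ₁ ∈ [λ+μ/2,λ+μ],
η₁ ∈ [λμ/2,2λμ]², η−η₁ ∈ [λμ/2,2λμ]², one has cλ²μ ≤ |R| ≤ Cλ²μ.
-/

noncomputable section

abbrev E2 := EuclideanSpace ℝ (Fin 2)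

/-- The KP-II resonance function. -/
def Rres (ξ ξ₁ : ℝ) (η η₁ : E2) : ℝ :=
  -3 * ξ * ξ₁ * (ξ - ξ₁) - ξ * ξ₁ / (ξ - ξ₁) * ‖ξ⁻¹ • η - ξ₁⁻¹ • η₁‖ ^ 2

/-!
The two terms of the KP-II resonance function have the same sign, so they cannot cancel: `|R|` is
`|ξ ξ₁ (ξ - ξ₁)|` times a factor that is at least `3`, and `|ξ ξ₁ (ξ - ξ₁)| ∼ λ² μ` because
`ξ, ξ - ξ₁ ∼ λ` and `ξ₁ ∼ μ`. For the upper bound, if `η₁` and `η - η₁` have norm at most `M`, then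
`|η/ξ - η₁/ξ₁| ≤ M/ξ₁`, so with `M ∼ λ μ` the transverse term is `O(M²/ξ₁) = O(λ² μ)`.
-/

section Norm

variable {ι : Type*} [Fintype ι]

lemma norm_le_sqrt_card_mul_of_forall_abs_le {x : EuclideanSpace ℝ ι} {B : ℝ} (hB : 0 ≤ B)
    (hx : ∀ i, |x i| ≤ B) : ‖x‖ ≤ √(Fintype.card ι) * B := by
  rw [EuclideanSpace.norm_eq, ← Real.sqrt_sq hB, ← Real.sqrt_mul (Nat.cast_nonneg _)]
  refine Real.sqrt_le_sqrt ?_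
  calc ∑ i, ‖x i‖ ^ 2 ≤ ∑ _i : ι, B ^ 2 := by
        gcongr with i
        exact hx i
    _ = Fintype.card ι * B ^ 2 := by simp

lemma norm_le_sqrt_card_mul_of_forall_mem_Icc {x : EuclideanSpace ℝ ι} {a b : ℝ} (ha : 0 ≤ a)
    (hb : 0 ≤ b) (hx : ∀ i, x i ∈ Set.Icc a b) : ‖x‖ ≤ √(Fintype.card ι) * b :=
  norm_le_sqrt_card_mul_of_forall_abs_le hb fun i =>
    abs_le.2 ⟨by linarith [(hx i).1], (hx i).2⟩

lemma norm_inv_smul_sub_inv_smul_le {E : Type*} [SeminormedAddCommGroup E] [NormedSpace ℝ E]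
    {x x₁ M : ℝ} {v v₁ : E} (hx₁ : 0 < x₁) (hle : x₁ ≤ x) (hv₁ : ‖v₁‖ ≤ M)
    (hv : ‖v - v₁‖ ≤ M) : ‖x⁻¹ • v - x₁⁻¹ • v₁‖ ≤ M / x₁ := by
  have hx : 0 ≤ x⁻¹ := inv_nonneg.2 (hx₁.le.trans hle)
  have hinv : 0 ≤ x₁⁻¹ - x⁻¹ := sub_nonneg.2 (inv_anti₀ hx₁ hle)
  calc ‖x⁻¹ • v - x₁⁻¹ • v₁‖ = ‖x⁻¹ • (v - v₁) - (x₁⁻¹ - x⁻¹) • v₁‖ := by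
        -- Both weights are nonnegative and they sum to `x₁⁻¹`.
        congr 1
        module
    _ ≤ ‖x⁻¹ • (v - v₁)‖ + ‖(x₁⁻¹ - x⁻¹) • v₁‖ := norm_sub_le _ _
    _ = x⁻¹ * ‖v - v₁‖ + (x₁⁻¹ - x⁻¹) * ‖v₁‖ := by
        rw [norm_smul_of_nonneg hx, norm_smul_of_nonneg hinv]
    _ ≤ x⁻¹ * M + (x₁⁻¹ - x⁻¹) * M := by gcongr
    _ = M / x₁ := by ring

end Norm

section Resonance

variable {ξ ξ₁ : ℝ} {η η₁ : E2}

lemma Rres_eq_neg_mul (h : ξ ≠ ξ₁) :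
    Rres ξ ξ₁ η η₁ = -(ξ * ξ₁ * (ξ - ξ₁) *
      (3 + ‖ξ⁻¹ • η - ξ₁⁻¹ • η₁‖ ^ 2 / (ξ - ξ₁) ^ 2)) := by
  have hsub : ξ - ξ₁ ≠ 0 := sub_ne_zero.2 h
  unfold Rres
  field_simp
  ring

lemma abs_Rres (h : ξ ≠ ξ₁) :
    |Rres ξ ξ₁ η η₁| = |ξ * ξ₁ * (ξ - ξ₁)| *
      (3 + ‖ξ⁻¹ • η - ξ₁⁻¹ • η₁‖ ^ 2 / (ξ - ξ₁) ^ 2) := by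
  have hfactor : 0 ≤ 3 + ‖ξ⁻¹ • η - ξ₁⁻¹ • η₁‖ ^ 2 / (ξ - ξ₁) ^ 2 := by positivity
  rw [Rres_eq_neg_mul h, abs_neg, abs_mul, abs_of_nonneg hfactor]

lemma three_mul_abs_le_abs_Rres (h : ξ ≠ ξ₁) :
    3 * |ξ * ξ₁ * (ξ - ξ₁)| ≤ |Rres ξ ξ₁ η η₁| := by
  rw [abs_Rres h, mul_comm]
  gcongr
  exact le_add_of_nonneg_right (by positivity)

lemma abs_Rres_le {M : ℝ} (hξ₁ : 0 < ξ₁) (hξ : 2 * ξ₁ ≤ ξ) (hη₁ : ‖η₁‖ ≤ M)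
    (hη : ‖η - η₁‖ ≤ M) :
    |Rres ξ ξ₁ η η₁| ≤ 3 * (ξ * ξ₁ * (ξ - ξ₁)) + 2 * M ^ 2 / ξ₁ := by
  have hξ_pos : 0 < ξ := by linarith
  have hsub : 0 < ξ - ξ₁ := by linarith
  have hratio : ξ / (ξ - ξ₁) ≤ 2 := by
    rw [div_le_iff₀ hsub]
    linarith
  have hnorm : ‖ξ⁻¹ • η - ξ₁⁻¹ • η₁‖ ≤ M / ξ₁ :=
    norm_inv_smul_sub_inv_smul_le hξ₁ (by linarith) hη₁ hη
  calc |Rres ξ ξ₁ η η₁|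
      = 3 * (ξ * ξ₁ * (ξ - ξ₁)) + ξ / (ξ - ξ₁) * ξ₁ * ‖ξ⁻¹ • η - ξ₁⁻¹ • η₁‖ ^ 2 := by
        rw [abs_Rres (sub_pos.1 hsub).ne', abs_of_pos (by positivity)]
        field_simp
    _ ≤ 3 * (ξ * ξ₁ * (ξ - ξ₁)) + 2 * ξ₁ * (M / ξ₁) ^ 2 := by gcongr
    _ = 3 * (ξ * ξ₁ * (ξ - ξ₁)) + 2 * M ^ 2 / ξ₁ := by field_simp

variable {lam μ : ℝ}

lemma mul_le_abs_Rres (hlam : 0 < lam) (hμ : 0 < μ) (hξ₁ : μ / 2 ≤ ξ₁) (hξ : lam ≤ ξ - ξ₁) :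
    3 / 2 * lam ^ 2 * μ ≤ |Rres ξ ξ₁ η η₁| := by
  have hξ₁_pos : 0 < ξ₁ := by linarith
  have hξ_ge : lam ≤ ξ := by linarith
  have hξ_pos : 0 < ξ := hlam.trans_le hξ_ge
  calc 3 / 2 * lam ^ 2 * μ = 3 * (lam * (μ / 2) * lam) := by ring
    _ ≤ 3 * (ξ * ξ₁ * (ξ - ξ₁)) := by gcongr
    _ ≤ 3 * |ξ * ξ₁ * (ξ - ξ₁)| := by
        gcongr
        exact le_abs_self _
    _ ≤ |Rres ξ ξ₁ η η₁| := three_mul_abs_le_abs_Rres (by linarith : ξ₁ < ξ).ne'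

lemma abs_Rres_le_mul {K : ℝ} (hμ : 0 < μ) (hμ_le : μ ≤ lam) (hξ₁ : ξ₁ ∈ Set.Icc (μ / 2) μ)
    (hξ : ξ - ξ₁ ∈ Set.Icc lam (2 * lam)) (hη₁ : ‖η₁‖ ≤ K * (lam * μ))
    (hη : ‖η - η₁‖ ≤ K * (lam * μ)) :
    |Rres ξ ξ₁ η η₁| ≤ (18 + 4 * K ^ 2) * lam ^ 2 * μ := by
  obtain ⟨hξ₁_ge, hξ₁_le⟩ := hξ₁
  obtain ⟨hsub_ge, hsub_le⟩ := hξ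
  have hξ₁_pos : 0 < ξ₁ := by linarith
  have hξ_le : ξ ≤ 3 * lam := by linarith
  have hsub_nonneg : 0 ≤ ξ - ξ₁ := by linarith
  calc |Rres ξ ξ₁ η η₁| ≤ 3 * (ξ * ξ₁ * (ξ - ξ₁)) + 2 * (K * (lam * μ)) ^ 2 / ξ₁ :=
        abs_Rres_le hξ₁_pos (by linarith) hη₁ hη
    _ ≤ 3 * (3 * lam * μ * (2 * lam)) + 2 * (K * (lam * μ)) ^ 2 / (μ / 2) := by
        have : 0 < lam := by linarith
        gcongr
    _ = (18 + 4 * K ^ 2) * lam ^ 2 * μ := by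
        field_simp
        ring

theorem resonance_two_sided_bound_general {K : ℝ} (hμ : 0 < μ) (hμ_le : μ ≤ lam)
    (hξ₁ : ξ₁ ∈ Set.Icc (μ / 2) μ) (hξ : ξ - ξ₁ ∈ Set.Icc lam (2 * lam))
    (hη₁ : ‖η₁‖ ≤ K * (lam * μ)) (hη : ‖η - η₁‖ ≤ K * (lam * μ)) :
    3 / 2 * lam ^ 2 * μ ≤ |Rres ξ ξ₁ η η₁| ∧
      |Rres ξ ξ₁ η η₁| ≤ (18 + 4 * K ^ 2) * lam ^ 2 * μ :=
  ⟨mul_le_abs_Rres (hμ.trans_le hμ_le) hμ hξ₁.1 hξ.1,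
    abs_Rres_le_mul hμ hμ_le hξ₁ hξ hη₁ hη⟩

end Resonance

theorem resonance_two_sided_bound :
    ∃ c C : ℝ, 0 < c ∧ 0 < C ∧
      ∀ lam μ : ℝ, 16 ≤ lam → 0 < μ → μ ≤ 1 →
      ∀ ξ ξ₁ : ℝ, ∀ η η₁ : E2,
        ξ₁ ∈ Set.Icc (μ / 2) μ →
        ξ - ξ₁ ∈ Set.Icc (lam + μ / 2) (lam + μ) →
        (∀ i : Fin 2, η₁ i ∈ Set.Icc (lam * μ / 2) (2 * lam * μ)) →
        (∀ i : Fin 2, (η - η₁) i ∈ Set.Icc (lam * μ / 2) (2 * lam * μ)) →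
        c * lam ^ 2 * μ ≤ |Rres ξ ξ₁ η η₁| ∧ |Rres ξ ξ₁ η η₁| ≤ C * lam ^ 2 * μ := by
  refine ⟨3 / 2, 18 + 4 * (√2 * 2) ^ 2, by norm_num, by positivity, ?_⟩
  intro lam μ hlam hμ hμ_le ξ ξ₁ η η₁ hξ₁ hξ hη₁ hη
  have hmul_pos : 0 < lam * μ := mul_pos (by linarith) hμ
  have norm_le_of_mem_box {v : E2} (hv : ∀ i, v i ∈ Set.Icc (lam * μ / 2) (2 * lam * μ)) :
      ‖v‖ ≤ √2 * 2 * (lam * μ) := by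
    simpa [mul_assoc] using
      norm_le_sqrt_card_mul_of_forall_mem_Icc (by linarith) (by linarith) hv
  exact resonance_two_sided_bound_general hμ (by linarith) hξ₁
    (Set.Icc_subset_Icc (by linarith) (by linarith) hξ)
    (norm_le_of_mem_box hη₁) (norm_le_of_mem_box hη)
end
end
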